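/- arXiv:1907.05935 — 2 statements merged into one kernel-verified Lean document; each statement's English description precedes it below -/
import Mathlib

section
/- For every real number p with 0.781 ≤ p ≤ 1, one has π·p·√(3−2p)·(1 + p²/4 + p(1−p)/2 + 9p⁴/64 + 9p³(1−p)/16 + 3p²(1−p)²/8) > 4. -/
/-!
Put `q = 1 - p ∈ [0, 0.219]`. The polynomial factor is
`R₄ = 89/64 - (23/32) q² + (3/8) q³ - (3/64) q⁴`, and by concavity `√(1 + 2q)` lies above the line
`1 + 0.909 q`, which is nearly its chord on this interval. With `π > 3.1415` the claim becomes a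
polynomial inequality on an interval. The expression is smallest at `q = 0.219`, where it exceeds
`4` by only about `0.0014`, so the constants have to be this sharp.
-/

/-- The polynomial inequality left after bounding `π` and the square root. -/
lemma poly_bound (q : ℝ) (h0 : 0 ≤ q) (h1 : q ≤ 0.219) :
    4 < 3.1415 * (1 - q) * (1 + 0.909 * q) *
      (89 / 64 - 23 / 32 * q ^ 2 + 3 / 8 * q ^ 3 - 3 / 64 * q ^ 4) := by
  have h2 : 0 ≤ 0.219 - q := sub_nonneg.2 h1
  nlinarith [mul_nonneg h0 h2, mul_nonneg (mul_nonneg h0 h2) h0, pow_nonneg h0 3,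
    pow_nonneg h0 4, mul_nonneg (pow_nonneg h0 3) h2, mul_nonneg (pow_nonneg h0 4) h2,
    mul_nonneg (pow_nonneg h0 5) h2]

/-- For every `p` with `0.781 ≤ p ≤ 1`, the quantity `π·p·√(3-2p)·R₄(p)` exceeds `4`, where
`R₄(p) = 1 + p²/4 + p(1-p)/2 + 9p⁴/64 + 9p³(1-p)/16 + 3p²(1-p)²/8`. -/
theorem stmt1 (p : ℝ) (hp0 : 0.781 ≤ p) (hp1 : p ≤ 1) :
    Real.pi * p * Real.sqrt (3 - 2 * p) *
        (1 + p ^ 2 / 4 + p * (1 - p) / 2 + 9 * p ^ 4 / 64 + 9 * p ^ 3 * (1 - p) / 16 +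
          3 * p ^ 2 * (1 - p) ^ 2 / 8) > 4 := by
  have hq0 : 0 ≤ 1 - p := by linarith
  have hsqrt : 1 + 0.909 * (1 - p) ≤ √(3 - 2 * p) := by
    apply Real.le_sqrt_of_sq_le
    nlinarith [mul_nonneg hq0 (sub_nonneg.2 hp0)]
  have hpoly := poly_bound (1 - p) hq0 (by linarith)
  have hR : 1 + p ^ 2 / 4 + p * (1 - p) / 2 + 9 * p ^ 4 / 64 + 9 * p ^ 3 * (1 - p) / 16 +
      3 * p ^ 2 * (1 - p) ^ 2 / 8 = 89 / 64 - 23 / 32 * (1 - p) ^ 2 + 3 / 8 * (1 - p) ^ 3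
        - 3 / 64 * (1 - p) ^ 4 := by ring
  have hRpos : 0 ≤ 1 + p ^ 2 / 4 + p * (1 - p) / 2 + 9 * p ^ 4 / 64 + 9 * p ^ 3 * (1 - p) / 16 +
      3 * p ^ 2 * (1 - p) ^ 2 / 8 := by positivity
  rw [← hR, sub_sub_cancel] at hpoly
  refine hpoly.trans_le ?_
  gcongr
  linarith [Real.pi_gt_d4]
end

section
/- Let T be a [0,∞]-valued random variable on a probability space, let α > 0, let i₀ ∈ ℕ, and let (t_i)_{i∈ℕ} be a strictly increasing sequence of positive reals. Suppose that for every i ≥ i₀ one has P(T > t_{i+1}) ≤ (1 − α·(t_{i+1} − t_i)/t_i) · P(T > t_i). Then for every i ≥ i₀, P(T > t_i) ≤ P(T > t_{i₀}) · (t_{i₀}/t_i)^α. -/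
/-!
A single step costs at most a factor `1 - α (b - a) / a ≤ 1 + α log (a / b) ≤ (a / b) ^ α`, by
`1 - 1 / x ≤ log x` and `1 + y ≤ exp y`; this is `one_sub_le_rpow_div`. These factors telescope
under multiplication, so the bound follows by induction on `i`.
-/

open MeasureTheory
open scoped ENNReal

theorem one_sub_le_rpow_div {α a b : ℝ} (hα : 0 ≤ α) (ha : 0 < a) (hb : 0 < b) :
    1 - α * (b - a) / a ≤ (a / b) ^ α := by
  have hlog := Real.one_sub_inv_le_log_of_pos (div_pos ha hb)
  rw [Real.rpow_def_of_pos (div_pos ha hb)]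
  calc 1 - α * (b - a) / a = (1 - (a / b)⁻¹) * α + 1 := by field_simp; ring
    _ ≤ Real.log (a / b) * α + 1 := by gcongr
    _ ≤ Real.exp (Real.log (a / b) * α) := Real.add_one_le_exp _

/-- Power-law decay: if `P(T > t_{i+1}) ≤ (1 - α (t_{i+1} - t_i)/t_i) P(T > t_i)` for all
`i ≥ i₀`, then `P(T > t_i) ≤ P(T > t_{i₀}) (t_{i₀}/t_i)^α` for all `i ≥ i₀`. -/
theorem stmt14 (Ω : Type) [MeasurableSpace Ω] (μ : Measure Ω) [IsProbabilityMeasure μ]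
    (T : Ω → ℝ≥0∞) (α : ℝ) (hα : 0 < α) (i₀ : ℕ) (t : ℕ → ℝ)
    (htpos : ∀ i, 0 < t i) (hmono : StrictMono t)
    (hrec : ∀ i, i₀ ≤ i →
      μ {ω | ENNReal.ofReal (t (i + 1)) < T ω} ≤
        ENNReal.ofReal (1 - α * (t (i + 1) - t i) / t i) *
          μ {ω | ENNReal.ofReal (t i) < T ω}) :
    ∀ i, i₀ ≤ i →
      μ {ω | ENNReal.ofReal (t i) < T ω} ≤
        μ {ω | ENNReal.ofReal (t i₀) < T ω} * ENNReal.ofReal ((t i₀ / t i) ^ α) := by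
  intro i hi
  induction i, hi using Nat.le_induction with
  | base => simp [div_self (htpos i₀).ne']
  | succ i hi ih =>
    have hsplit : (t i₀ / t (i + 1)) ^ α = (t i / t (i + 1)) ^ α * (t i₀ / t i) ^ α := by
      rw [← Real.mul_rpow (div_pos (htpos _) (htpos _)).le (div_pos (htpos _) (htpos _)).le]
      congr 1
      have := (htpos i).ne'
      have := (htpos (i + 1)).ne'
      field_simp
    calc _ ≤ _ := hrec i hi
      _ ≤ ENNReal.ofReal ((t i / t (i + 1)) ^ α) *
          (μ {ω | ENNReal.ofReal (t i₀) < T ω} * ENNReal.ofReal ((t i₀ / t i) ^ α)) :=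
        mul_le_mul' (ENNReal.ofReal_le_ofReal
          (one_sub_le_rpow_div hα.le (htpos i) (htpos (i + 1)))) ih
      _ = _ := by
        rw [hsplit, ENNReal.ofReal_mul (Real.rpow_nonneg (div_pos (htpos _) (htpos _)).le _),
          mul_left_comm]
end
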